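/- A function F : ℝ → ℝ maps M([−1,1]) into itself when applied entrywise (that is, for every admissible measure μ supported in [−1,1] there exists an admissible measure σ supported in [−1,1] with F(s_k(μ)) = s_k(σ) for all k ≥ 0) if and only if F is the restriction to ℝ of an absolutely monotonic entire function. -/

import Mathlib

open MeasureTheory Filter Set
open scoped ENNReal

/-- An admissible measure: a non-negative Borel measure on `ℝ` all of whose absolute
moments are finite. -/
def IsAdmissible (μ : Measure ℝ) : Prop := ∀ k : ℕ, Integrable (fun x => x ^ k) μ

/-- The `k`-th power moment of a measure. -/
noncomputable def moment (μ : Measure ℝ) (k : ℕ) : ℝ := ∫ x, x ^ k ∂μ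

/-- `momentSet K` is the set of moment sequences of admissible measures supported in `K`. -/
def momentSet (K : Set ℝ) : Set (ℕ → ℝ) :=
  {s | ∃ μ : Measure ℝ, IsAdmissible μ ∧ μ Kᶜ = 0 ∧ ∀ k, s k = moment μ k}

/-- An absolutely monotonic entire function: a power series with non-negative
coefficients converging at every real point. -/
def AbsolutelyMonotonicEntire (G : ℝ → ℝ) : Prop :=
  ∃ c : ℕ → ℝ, (∀ n, 0 ≤ c n) ∧ ∀ x : ℝ, HasSum (fun n => c n * x ^ n) (G x)

/-!
Moment sequences on a multiplicatively closed set are closed under nonnegative combinations,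
convergent series and, by multiplicative convolution of measures, products; hence every power
series with nonnegative coefficients preserves them.

Conversely, let `F` preserve moment sequences. Integrating `1 - x ≥ 0` against two-atom measures
shows that `F` is monotone on `[0, ∞)`. If `F` is smooth, positivity on the measures
`a δ₁ + b δ_r` with `0 < r < 1` and `b → 0` makes all its derivatives nonnegative (Loewner's
argument), so `F` is a power series on `[0, ∞)` by Bernstein's theorem. In general, mollifying the
monotone function `F` traps an absolutely monotonic entire function between `F` and `F (· + δ)`;
as `δ → 0` a limit `G` of these functions agrees with `F` on `(0, ∞)`. Finally, a point `x ≤ 0` is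
the first moment of a measure `δ₁ + b δ_u` with `-1 < u < 0`, whose moments of large order are
positive. The moment sequences obtained from it by `F` and by `G` thus eventually agree, which for
measures on `[-1, 1]` forces them to agree at every positive order, so `F x = G x`.
-/

/-! ### Moment sequences form a semiring closed under convergent series -/

namespace IsAdmissible

variable {μ ν : Measure ℝ}

lemma isFiniteMeasure (hμ : IsAdmissible μ) : IsFiniteMeasure μ :=
  (integrable_const_iff_isFiniteMeasure one_ne_zero).1 (by simpa only [pow_zero] using hμ 0)

lemma mconv (hμ : IsAdmissible μ) (hν : IsAdmissible ν) : IsAdmissible (μ ∗ₘ ν) := by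
  have := hμ.isFiniteMeasure
  have := hν.isFiniteMeasure
  intro k
  rw [Measure.mconv, integrable_map_measure (by fun_prop) (by fun_prop)]
  simpa only [Function.comp_def, mul_pow] using (hμ k).mul_prod (hν k)

lemma integral_norm_pow_le (hμ : IsAdmissible μ) (k : ℕ) :
    ∫ x, ‖x ^ k‖ ∂μ ≤ moment μ 0 + moment μ (k * 2) := by
  rw [moment, moment, ← integral_add (hμ 0) (hμ (k * 2))]
  refine integral_mono (hμ k).norm ((hμ 0).add (hμ (k * 2))) fun x => ?_
  have := sq_nonneg (‖x ^ k‖ - 1)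
  simp only [pow_zero, pow_mul, ← Real.norm_eq_abs, ← sq_abs (x ^ k)]
  nlinarith [norm_nonneg (x ^ k)]

lemma sum {ι : Type*} [Countable ι] {μ : ι → Measure ℝ} (hμ : ∀ n, IsAdmissible (μ n))
    (hsum : ∀ k, Summable fun n => moment (μ n) k) : IsAdmissible (Measure.sum μ) := fun k =>
  integrable_sum_measure (fun n => hμ n k) <|
    ((hsum 0).add (hsum (k * 2))).of_nonneg_of_le
      (fun _ => integral_nonneg fun _ => norm_nonneg _) fun n => (hμ n).integral_norm_pow_le k

end IsAdmissible

section MomentSet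

variable {K : Set ℝ} {s t : ℕ → ℝ}

lemma momentSet_mono {L : Set ℝ} (h : K ⊆ L) : momentSet K ⊆ momentSet L := by
  rintro s ⟨μ, hμ, hμK, hs⟩
  exact ⟨μ, hμ, measure_mono_null (compl_subset_compl.2 h) hμK, hs⟩

lemma const_mul_pow_mem_momentSet {a u : ℝ} (ha : 0 ≤ a) (hu : u ∈ K) :
    (fun k => a * u ^ k) ∈ momentSet K := by
  refine ⟨ENNReal.ofReal a • Measure.dirac u, fun k => ?_, ?_, fun k => ?_⟩
  · exact (integrable_dirac (by simp)).smul_measure ENNReal.ofReal_ne_top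
  · simp [hu]
  · simp [moment, ha]

lemma add_mem_momentSet (hs : s ∈ momentSet K) (ht : t ∈ momentSet K) :
    (fun k => s k + t k) ∈ momentSet K := by
  obtain ⟨μ, hμ, hμK, hs⟩ := hs
  obtain ⟨ν, hν, hνK, ht⟩ := ht
  refine ⟨μ + ν, fun k => (hμ k).add_measure (hν k), by simp [hμK, hνK], fun k => ?_⟩
  simp only [hs, ht, moment, integral_add_measure (hμ k) (hν k)]

lemma const_add_mul_pow_mem_momentSet (one_mem : 1 ∈ K) {a b u : ℝ} (ha : 0 ≤ a) (hb : 0 ≤ b)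
    (hu : u ∈ K) : (fun k => a + b * u ^ k) ∈ momentSet K := by
  simpa using add_mem_momentSet (const_mul_pow_mem_momentSet ha one_mem)
    (const_mul_pow_mem_momentSet hb hu)

lemma mul_mem_momentSet (hK : MeasurableSet K) (mul_mem : ∀ x ∈ K, ∀ y ∈ K, x * y ∈ K)
    (hs : s ∈ momentSet K) (ht : t ∈ momentSet K) : (fun k => s k * t k) ∈ momentSet K := by
  obtain ⟨μ, hμ, hμK, hs⟩ := hs
  obtain ⟨ν, hν, hνK, ht⟩ := ht
  have := hμ.isFiniteMeasure
  have := hν.isFiniteMeasure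
  refine ⟨μ ∗ₘ ν, hμ.mconv hν, ?_, fun k => ?_⟩
  · have hμν : ∀ᵐ p ∂μ.prod ν, p.1 * p.2 ∈ K := by
      filter_upwards [Measure.quasiMeasurePreserving_fst.ae (mem_ae_iff.2 hμK),
        Measure.quasiMeasurePreserving_snd.ae (mem_ae_iff.2 hνK)] with p hp₁ hp₂
      exact mul_mem _ hp₁ _ hp₂
    exact mem_ae_iff.1 ((ae_map_iff (by fun_prop) hK).2 hμν)
  · simp only [hs, ht, moment]
    rw [integral_mconv (hμ.mconv hν k)]
    simp only [mul_pow, integral_const_mul, integral_mul_const]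

lemma pow_mem_momentSet (hK : MeasurableSet K) (one_mem : 1 ∈ K)
    (mul_mem : ∀ x ∈ K, ∀ y ∈ K, x * y ∈ K) (hs : s ∈ momentSet K) (n : ℕ) :
    (fun k => s k ^ n) ∈ momentSet K := by
  induction n with
  | zero => simpa using const_mul_pow_mem_momentSet zero_le_one one_mem
  | succ n ih => simpa only [pow_succ] using mul_mem_momentSet hK mul_mem ih hs

lemma mem_momentSet_of_hasSum {ι : Type*} [Countable ι] {s : ι → ℕ → ℝ}
    (hs : ∀ n, s n ∈ momentSet K) (ht : ∀ k, HasSum (fun n => s n k) (t k)) : t ∈ momentSet K := by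
  choose μ hμ hμK hsμ using hs
  simp only [hsμ] at ht
  have hsum : IsAdmissible (Measure.sum μ) := .sum hμ fun k => (ht k).summable
  exact ⟨Measure.sum μ, hsum, Measure.sum_apply_eq_zero.2 hμK, fun k =>
    (ht k).unique (hasSum_integral_measure (hsum k))⟩

lemma AbsolutelyMonotonicEntire.comp_mem_momentSet {G : ℝ → ℝ} (hG : AbsolutelyMonotonicEntire G)
    (hK : MeasurableSet K) (one_mem : 1 ∈ K) (mul_mem : ∀ x ∈ K, ∀ y ∈ K, x * y ∈ K)
    (hs : s ∈ momentSet K) : (fun k => G (s k)) ∈ momentSet K := by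
  obtain ⟨c, hc, hG⟩ := hG
  refine mem_momentSet_of_hasSum (fun n => ?_) fun k => hG (s k)
  have hconst : (fun _ => c n) ∈ momentSet K := by
    simpa using const_mul_pow_mem_momentSet (hc n) one_mem
  exact mul_mem_momentSet hK mul_mem hconst (pow_mem_momentSet hK one_mem mul_mem hs n)

end MomentSet

/-! ### The Riesz functional -/

section Riesz

open Polynomial

/-- The Riesz functional of a sequence `s`, i.e. the linear functional on polynomials with
`X ^ k ↦ s k`; for the moment sequence of `μ` it is integration against `μ`. -/
noncomputable def rieszFunctional (s : ℕ → ℝ) : ℝ[X] →ₗ[ℝ] ℝ :=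
  lsum fun k => s k • LinearMap.id

variable {K : Set ℝ} {s t : ℕ → ℝ}

lemma rieszFunctional_apply (s : ℕ → ℝ) (p : ℝ[X]) :
    rieszFunctional s p = ∑ k ∈ p.support, p.coeff k * s k := by
  simp [rieszFunctional, sum_def, mul_comm]

@[simp]
lemma rieszFunctional_X_pow (s : ℕ → ℝ) (k : ℕ) : rieszFunctional s (X ^ k) = s k := by
  simp [rieszFunctional, X_pow_eq_monomial]

lemma integral_eval {μ : Measure ℝ} (hμ : IsAdmissible μ) (p : ℝ[X]) :
    ∫ x, p.eval x ∂μ = rieszFunctional (moment μ) p := by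
  simp only [eval_eq_sum, sum_def, rieszFunctional_apply, moment]
  rw [integral_finsetSum _ fun k _ => (hμ k).const_mul _]
  simp only [integral_const_mul]

lemma rieszFunctional_nonneg (hs : s ∈ momentSet K) {p : ℝ[X]} (hp : ∀ x ∈ K, 0 ≤ p.eval x) :
    0 ≤ rieszFunctional s p := by
  obtain ⟨μ, hμ, hμK, hs⟩ := hs
  rw [funext hs, ← integral_eval hμ]
  refine integral_nonneg_of_ae ?_
  filter_upwards [mem_ae_iff.2 hμK] with x hx using hp x hx

lemma rieszFunctional_congr_of_X_pow_dvd {m : ℕ} {p : ℝ[X]} (hp : X ^ m ∣ p)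
    (hst : ∀ k ≥ m, s k = t k) : rieszFunctional s p = rieszFunctional t p := by
  simp only [rieszFunctional_apply]
  refine Finset.sum_congr rfl fun k hk => ?_
  rw [hst k (not_lt.1 fun hkm => mem_support_iff.1 hk (X_pow_dvd_iff.1 hp k hkm))]

lemma tendsto_integral_pow_mul_one_sub_pow {μ : Measure ℝ} [IsFiniteMeasure μ]
    (hμ : μ (Icc (-1) 1)ᶜ = 0) {j : ℕ} (hj : j ≠ 0) (m : ℕ) :
    Tendsto (fun N : ℕ => ∫ x, x ^ j * (1 - (x ^ 2) ^ m) ^ N ∂μ) atTop (nhds 0) := by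
  have hsq {x : ℝ} (hx : x ∈ Icc (-1) 1) : (x ^ 2) ^ m ≤ 1 :=
    pow_le_one₀ (sq_nonneg x) ((sq_le_one_iff_abs_le_one x).2 (abs_le.2 hx))
  rw [← integral_zero ℝ ℝ (μ := μ)]
  refine tendsto_integral_of_dominated_convergence (fun _ => 1) (fun N => by fun_prop)
    (integrable_const _) (fun N => ?_) ?_
  · filter_upwards [mem_ae_iff.2 hμ] with x hx
    have hle : ‖1 - (x ^ 2) ^ m‖ ≤ 1 :=
      abs_le.2 ⟨by linarith [hsq hx], by linarith [pow_nonneg (sq_nonneg x) m]⟩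
    rw [norm_mul, norm_pow, norm_pow]
    exact mul_le_one₀ (pow_le_one₀ (norm_nonneg _) (abs_le.2 hx)) (by positivity)
      (pow_le_one₀ (norm_nonneg _) hle)
  · filter_upwards [mem_ae_iff.2 hμ] with x hx
    rcases eq_or_ne x 0 with rfl | hx0
    · simp [hj]
    · have hpos : 0 < (x ^ 2) ^ m := by positivity
      simpa using (tendsto_pow_atTop_nhds_zero_of_lt_one (by linarith [hsq hx])
        (by linarith : 1 - (x ^ 2) ^ m < 1)).const_mul (x ^ j)

lemma tendsto_rieszFunctional_X_pow_mul_one_sub_X_pow (hs : s ∈ momentSet (Icc (-1) 1)) {j : ℕ}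
    (hj : j ≠ 0) (m : ℕ) :
    Tendsto (fun N : ℕ => rieszFunctional s (X ^ j * (1 - (X ^ 2) ^ m) ^ N)) atTop (nhds 0) := by
  obtain ⟨μ, hμ, hμK, hs⟩ := hs
  have := hμ.isFiniteMeasure
  simp only [funext hs, ← integral_eval hμ]
  simpa using tendsto_integral_pow_mul_one_sub_pow hμK hj m

-- Two measures with the same moments of large order agree off `0`, so only the moment of order
-- zero can distinguish them: modulo `X ^ m` the polynomial `X ^ j * (1 - (X ^ 2) ^ m) ^ N` is
-- `X ^ j`, and it tends to zero boundedly on `[-1, 1]`.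
lemma eq_of_eventuallyEq_of_mem_momentSet (hs : s ∈ momentSet (Icc (-1) 1))
    (ht : t ∈ momentSet (Icc (-1) 1)) (hst : s =ᶠ[atTop] t) {j : ℕ} (hj : j ≠ 0) : s j = t j := by
  obtain ⟨m, hm⟩ := eventually_atTop.1 hst
  have hdvd (N : ℕ) : (X : ℝ[X]) ^ m ∣ X ^ j * (1 - (X ^ 2) ^ m) ^ N - X ^ j := by
    have hpow : (X : ℝ[X]) ^ m ∣ (1 - (X ^ 2) ^ m) - 1 := by
      rw [sub_sub_cancel_left, dvd_neg, ← pow_mul]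
      exact pow_dvd_pow X (by omega)
    have hfactor : (X : ℝ[X]) ^ j * (1 - (X ^ 2) ^ m) ^ N - X ^ j =
        X ^ j * ((1 - (X ^ 2) ^ m) ^ N - 1 ^ N) := by ring
    rw [hfactor]
    exact (hpow.trans (sub_dvd_pow_sub_pow _ _ N)).mul_left _
  have hdiff (N : ℕ) : rieszFunctional s (X ^ j * (1 - (X ^ 2) ^ m) ^ N) -
      rieszFunctional t (X ^ j * (1 - (X ^ 2) ^ m) ^ N) = s j - t j := by
    have := rieszFunctional_congr_of_X_pow_dvd (hdvd N) hm
    simp only [map_sub, rieszFunctional_X_pow] at this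
    linarith
  have hlim := (tendsto_rieszFunctional_X_pow_mul_one_sub_X_pow hs hj m).sub
    (tendsto_rieszFunctional_X_pow_mul_one_sub_X_pow ht hj m)
  simp only [hdiff, sub_zero] at hlim
  exact sub_eq_zero.1 (tendsto_nhds_unique tendsto_const_nhds hlim)

end Riesz

/-! ### Bernstein's theorem on absolutely monotone functions -/

section Bernstein

open scoped Nat ContDiff

lemma exists_eq_taylorWithinEval_add {f : ℝ → ℝ} {s : Set ℝ} {x₀ x : ℝ} {n : ℕ}
    (hs : UniqueDiffOn ℝ s) (hf : ContDiffOn ℝ (n + 1) f s) (hx : x₀ < x) (hsub : Icc x₀ x ⊆ s) :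
    ∃ ξ ∈ Ioo x₀ x, f x = taylorWithinEval f n s x₀ x +
      iteratedDerivWithin (n + 1) f s ξ * (x - x₀) ^ (n + 1) / (n + 1)! := by
  have hu : UniqueDiffOn ℝ (Icc x₀ x) := uniqueDiffOn_Icc hx
  have hderiv {k : ℕ} (hk : k ≤ n + 1) {y : ℝ} (hy : y ∈ Icc x₀ x) :
      iteratedDerivWithin k f (Icc x₀ x) y = iteratedDerivWithin k f s y := by
    simp only [iteratedDerivWithin_eq_iteratedFDerivWithin]
    rw [iteratedFDerivWithin_subset hsub hu hs (hf.of_le (mod_cast hk)) hy]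
  have hfI : ContDiffOn ℝ (n + 1) f (Icc x₀ x) := hf.mono hsub
  obtain ⟨ξ, hξ, htaylor⟩ := taylor_mean_remainder_lagrange (n := n) hx.ne
    (by simpa only [uIcc_of_le hx.le] using hfI.of_le (mod_cast n.le_succ))
    (by
      rw [uIcc_of_le hx.le, uIoo_of_le hx.le]
      exact (hfI.differentiableOn_iteratedDerivWithin (mod_cast n.lt_succ_self) hu).mono
        Ioo_subset_Icc_self)
  rw [uIoo_of_le hx.le] at hξ
  rw [uIcc_of_le hx.le, hderiv le_rfl (Ioo_subset_Icc_self hξ), sub_eq_iff_eq_add'] at htaylor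
  refine ⟨ξ, hξ, htaylor.trans ?_⟩
  congr 1
  simp only [taylor_within_apply]
  refine Finset.sum_congr rfl fun k hk => ?_
  rw [hderiv (Finset.mem_range.1 hk).le (left_mem_Icc.2 hx.le)]

variable {f : ℝ → ℝ} {a x y : ℝ}

lemma monotoneOn_iteratedDerivWithin_Ici (hf : AbsolutelyMonotoneOn f (Ici a)) (n : ℕ) :
    MonotoneOn (iteratedDerivWithin n f (Ici a)) (Ici a) := by
  have hd : DifferentiableOn ℝ (iteratedDerivWithin n f (Ici a)) (Ici a) :=
    hf.contDiffOn.differentiableOn_iteratedDerivWithin (mod_cast ENat.natCast_lt_top n)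
      (uniqueDiffOn_Ici a)
  refine monotoneOn_of_deriv_nonneg (convex_Ici a) hd.continuousOn (hd.mono interior_subset)
    fun x hx => ?_
  rw [← derivWithin_of_mem_nhds (mem_interior_iff_mem_nhds.1 hx), ← iteratedDerivWithin_succ]
  exact hf.iteratedDerivWithin_nonneg (uniqueDiffOn_Ici a) _ (interior_subset hx)

lemma taylorWithinEval_Ici_le (hf : AbsolutelyMonotoneOn f (Ici a)) (hx : a ≤ x) (hxy : x < y)
    (n : ℕ) : taylorWithinEval f n (Ici a) x y ≤ f y := by
  obtain ⟨ξ, hξ, htaylor⟩ := exists_eq_taylorWithinEval_add (n := n) (uniqueDiffOn_Ici a)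
    (hf.contDiffOn.of_le (mod_cast le_top)) hxy fun z hz => hx.trans hz.1
  have hderiv := hf.iteratedDerivWithin_nonneg (uniqueDiffOn_Ici a) (n + 1) (hx.trans hξ.1.le)
  have : 0 ≤ y - x := sub_nonneg.2 hxy.le
  rw [htaylor]
  exact le_add_of_nonneg_right (by positivity)

lemma iteratedDerivWithin_Ici_mul_pow_div_factorial_le (hf : AbsolutelyMonotoneOn f (Ici a))
    (hx : a ≤ x) (hxy : x < y) (n : ℕ) :
    iteratedDerivWithin n f (Ici a) x * (y - x) ^ n / n ! ≤ f y := by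
  refine le_trans ?_ (taylorWithinEval_Ici_le hf hx hxy n)
  have : 0 ≤ y - x := sub_nonneg.2 hxy.le
  have hterm (k : ℕ) :
      0 ≤ ((k ! : ℝ)⁻¹ * (y - x) ^ k) • iteratedDerivWithin k f (Ici a) x :=
    smul_nonneg (by positivity) (hf.iteratedDerivWithin_nonneg (uniqueDiffOn_Ici a) k hx)
  rw [taylor_within_apply]
  convert! Finset.single_le_sum (fun k _ => hterm k) (Finset.self_mem_range_succ n) using 1
  rw [smul_eq_mul]
  ring

-- The remainder at `y` is at most `f⁽ⁿ⁺¹⁾(y) (y - a)ⁿ⁺¹ / (n + 1)!`, and the Taylor expansion of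
-- `f` at `y`, evaluated at distance `2 (y - a)`, bounds `2ⁿ⁺¹` times this quantity.
lemma sub_taylorWithinEval_Ici_le (hf : AbsolutelyMonotoneOn f (Ici a)) (hy : a < y) (n : ℕ) :
    f y - taylorWithinEval f n (Ici a) a y ≤ f (y + 2 * (y - a)) * (1 / 2) ^ (n + 1) := by
  obtain ⟨ξ, hξ, htaylor⟩ := exists_eq_taylorWithinEval_add (n := n) (uniqueDiffOn_Ici a)
    (hf.contDiffOn.of_le (mod_cast le_top)) hy Icc_subset_Ici_self
  have hsub : 0 < y - a := sub_pos.2 hy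
  calc f y - taylorWithinEval f n (Ici a) a y
      = iteratedDerivWithin (n + 1) f (Ici a) ξ * (y - a) ^ (n + 1) / (n + 1)! := by
        rw [htaylor, add_sub_cancel_left]
    _ ≤ iteratedDerivWithin (n + 1) f (Ici a) y * (y - a) ^ (n + 1) / (n + 1)! := by
        gcongr
        exact monotoneOn_iteratedDerivWithin_Ici hf _ hξ.1.le hy.le hξ.2.le
    _ = iteratedDerivWithin (n + 1) f (Ici a) y * (y + 2 * (y - a) - y) ^ (n + 1) / (n + 1)! *
          (1 / 2) ^ (n + 1) := by
        rw [add_sub_cancel_left, mul_pow, one_div, inv_pow]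
        field_simp
    _ ≤ f (y + 2 * (y - a)) * (1 / 2) ^ (n + 1) := by
        gcongr
        exact iteratedDerivWithin_Ici_mul_pow_div_factorial_le hf hy.le (by linarith) _

theorem hasSum_taylor_of_absolutelyMonotoneOn_Ici (hf : AbsolutelyMonotoneOn f (Ici a))
    (hx : a ≤ x) :
    HasSum (fun n : ℕ => iteratedDerivWithin n f (Ici a) a / n ! * (x - a) ^ n) (f x) := by
  rcases hx.eq_or_lt with rfl | hx
  · simpa using hasSum_single (f := fun n : ℕ => iteratedDerivWithin n f (Ici a) a / n ! *
      (a - a) ^ n) 0 fun n hn => by simp [hn]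
  have hnonneg (n : ℕ) : 0 ≤ iteratedDerivWithin n f (Ici a) a / n ! * (x - a) ^ n :=
    mul_nonneg (div_nonneg (hf.iteratedDerivWithin_nonneg (uniqueDiffOn_Ici a) n self_mem_Ici)
      (by positivity)) (pow_nonneg (sub_nonneg.2 hx.le) n)
  have hpartial (n : ℕ) : ∑ k ∈ Finset.range (n + 1), iteratedDerivWithin k f (Ici a) a / k ! *
      (x - a) ^ k = taylorWithinEval f n (Ici a) a x := by
    rw [taylor_within_apply]
    exact Finset.sum_congr rfl fun k _ => by rw [smul_eq_mul]; ring
  rw [hasSum_iff_tendsto_nat_of_nonneg hnonneg, ← tendsto_add_atTop_iff_nat 1]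
  simp only [hpartial]
  refine tendsto_of_tendsto_of_tendsto_of_le_of_le ?_ tendsto_const_nhds
    (fun n => sub_le_comm.1 (sub_taylorWithinEval_Ici_le hf hx n))
    (fun n => taylorWithinEval_Ici_le hf le_rfl hx n)
  have hgeom : Tendsto (fun n : ℕ => (1 / 2 : ℝ) ^ (n + 1)) atTop (nhds 0) :=
    (tendsto_pow_atTop_nhds_zero_of_lt_one (by norm_num) (by norm_num)).comp
      (tendsto_add_atTop_nat 1)
  simpa using (hgeom.const_mul (f (x + 2 * (x - a)))).const_sub (f x)

lemma summable_coeff_mul_pow_of_summable_abs {c : ℕ → ℝ} (hc : ∀ n, 0 ≤ c n) {x : ℝ}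
    (h : Summable fun n => c n * |x| ^ n) : Summable fun n => c n * x ^ n :=
  h.of_norm_bounded fun n => by
    rw [norm_mul, norm_pow, Real.norm_of_nonneg (hc n), Real.norm_eq_abs]

theorem exists_absolutelyMonotonicEntire_eqOn_Ici (hf : AbsolutelyMonotoneOn f (Ici 0)) :
    ∃ G, AbsolutelyMonotonicEntire G ∧ EqOn f G (Ici 0) := by
  set c : ℕ → ℝ := fun n => iteratedDerivWithin n f (Ici 0) 0 / (n !)
  have hc (n : ℕ) : 0 ≤ c n := div_nonneg
    (hf.iteratedDerivWithin_nonneg (uniqueDiffOn_Ici 0) n self_mem_Ici) (by positivity)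
  have hsum {x : ℝ} (hx : 0 ≤ x) : HasSum (fun n => c n * x ^ n) (f x) := by
    simpa only [sub_zero] using hasSum_taylor_of_absolutelyMonotoneOn_Ici hf hx
  exact ⟨fun x => ∑' n, c n * x ^ n, ⟨c, hc, fun x =>
    (summable_coeff_mul_pow_of_summable_abs hc (hsum (abs_nonneg x)).summable).hasSum⟩,
    fun x hx => (hsum hx).tsum_eq.symm⟩

end Bernstein

/-! ### Positivity on two-atom measures forces absolute monotonicity -/

section TwoAtom

open Polynomial
open scoped Nat ContDiff

/-- `F` keeps the Riesz functional nonnegative on nonnegative polynomials when applied entrywise to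
the moment sequences `a + b r ^ k` of the measures `a δ₁ + b δ_r`. -/
def PreservesTwoAtomPositivity (r : ℝ) (F : ℝ → ℝ) : Prop :=
  ∀ a b : ℝ, 0 ≤ a → 0 ≤ b → ∀ q : ℝ[X], (∀ x, 0 ≤ q.eval x) →
    0 ≤ rieszFunctional (fun k => F (a + b * r ^ k)) q

variable {r : ℝ} {F f : ℝ → ℝ}

lemma PreservesTwoAtomPositivity.congr (hF : PreservesTwoAtomPositivity r F) (hr : 0 ≤ r)
    (hFf : EqOn F f (Ici 0)) : PreservesTwoAtomPositivity r f := by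
  intro a b ha hb q hq
  have heq : (fun k => f (a + b * r ^ k)) = fun k => F (a + b * r ^ k) :=
    funext fun k => (hFf (mem_Ici.2 (by positivity))).symm
  rw [heq]
  exact hF a b ha hb q hq

lemma iteratedDeriv_nonneg_of_eventually_nonneg {g : ℝ → ℝ} {a : ℝ} {n : ℕ} (hg : ContDiff ℝ n g)
    (hpos : ∀ᶠ x in nhdsWithin a (Ioi a), 0 ≤ g x) (hzero : ∀ k < n, iteratedDeriv k g a = 0) :
    0 ≤ iteratedDeriv n g a := by
  have htaylor (x : ℝ) :
      taylorWithinEval g n univ a x = iteratedDeriv n g a / n ! * (x - a) ^ n := by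
    rw [taylor_within_apply, Finset.sum_range_succ, Finset.sum_eq_zero]
    · simp only [iteratedDerivWithin_univ, smul_eq_mul]
      ring
    · intro k hk
      simp [hzero k (Finset.mem_range.1 hk)]
  have hlim : Tendsto (fun x => g x / (x - a) ^ n) (nhdsWithin a (Ioi a))
      (nhds (iteratedDeriv n g a / n !)) := by
    have h := ((Real.taylor_tendsto convex_univ (mem_univ a) hg.contDiffOn).mono_left
      (nhdsWithin_mono a (subset_univ (Ioi a)))).add_const (iteratedDeriv n g a / n !)
    rw [zero_add] at h
    refine h.congr' ?_
    filter_upwards [self_mem_nhdsWithin] with x hx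
    have : x - a ≠ 0 := sub_ne_zero.2 (ne_of_gt hx)
    rw [htaylor]
    field_simp
    ring
  have hquot : 0 ≤ iteratedDeriv n g a / n ! := by
    refine ge_of_tendsto hlim ?_
    filter_upwards [hpos, self_mem_nhdsWithin] with x hgx hx
    exact div_nonneg hgx (pow_nonneg (sub_nonneg.2 (le_of_lt hx)) n)
  simpa [div_mul_cancel₀, Nat.factorial_ne_zero] using
    mul_nonneg hquot (Nat.cast_nonneg (α := ℝ) n !)

lemma contDiff_rieszFunctional_comp {n : ℕ} (hf : ContDiff ℝ n f) (a r : ℝ) (q : ℝ[X]) :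
    ContDiff ℝ n fun b => rieszFunctional (fun k => f (a + b * r ^ k)) q := by
  simp only [rieszFunctional_apply]
  fun_prop

lemma iteratedDeriv_rieszFunctional_comp {n : ℕ} (hf : ContDiff ℝ n f) (a r : ℝ) (q : ℝ[X]) :
    iteratedDeriv n (fun b => rieszFunctional (fun k => f (a + b * r ^ k)) q) 0 =
      q.eval (r ^ n) * iteratedDeriv n f a := by
  have hcomp (k : ℕ) :
      iteratedDeriv n (fun b => f (a + b * r ^ k)) 0 = (r ^ k) ^ n * iteratedDeriv n f a := by
    have hshift : ContDiff ℝ n fun z => f (a + z) := by fun_prop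
    simp only [mul_comm _ (r ^ k)]
    rw [iteratedDeriv_comp_const_mul hshift, iteratedDeriv_comp_const_add]
    simp
  simp only [rieszFunctional_apply]
  rw [iteratedDeriv_fun_sum fun k _ => by fun_prop, eval_eq_sum, sum_def, Finset.sum_mul]
  refine Finset.sum_congr rfl fun k _ => ?_
  rw [iteratedDeriv_const_mul_field, hcomp, pow_right_comm, mul_assoc]

lemma exists_nonneg_polynomial_eval_pow (hr₀ : 0 < r) (hr₁ : r < 1) (n : ℕ) :
    ∃ q : ℝ[X], (∀ x, 0 ≤ q.eval x) ∧ (∀ k < n, q.eval (r ^ k) = 0) ∧ 0 < q.eval (r ^ n) := by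
  refine ⟨∏ j ∈ Finset.range n, (X - C (r ^ j)) ^ 2, fun x => ?_, fun k hk => ?_, ?_⟩ <;>
    simp only [eval_prod, eval_pow, eval_sub, eval_X, eval_C]
  · exact Finset.prod_nonneg fun _ _ => sq_nonneg _
  · exact Finset.prod_eq_zero (Finset.mem_range.2 hk) (by simp)
  · refine Finset.prod_pos fun j hj => sq_pos_of_ne_zero (sub_ne_zero.2 ?_)
    exact (pow_lt_pow_right_of_lt_one₀ hr₀ hr₁ (Finset.mem_range.1 hj)).ne

-- With `q` vanishing at `1, r, …, rⁿ⁻¹`, the nonnegative function `b ↦ L (f (a + b r ^ k)) q` has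
-- leading Taylor coefficient `q(rⁿ) f⁽ⁿ⁾(a) / n!` at `b = 0`.
theorem PreservesTwoAtomPositivity.absolutelyMonotoneOn (hf : PreservesTwoAtomPositivity r f)
    (hr₀ : 0 < r) (hr₁ : r < 1) (hsmooth : ContDiff ℝ ∞ f) : AbsolutelyMonotoneOn f (Ici 0) := by
  refine .of_contDiff hsmooth fun n a ha => ?_
  obtain ⟨q, hq, hqzero, hqpos⟩ := exists_nonneg_polynomial_eval_pow hr₀ hr₁ n
  have hfn (k : ℕ) : ContDiff ℝ k f := hsmooth.of_le (mod_cast le_top)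
  refine nonneg_of_mul_nonneg_right ?_ hqpos
  rw [← iteratedDeriv_rieszFunctional_comp (hfn n)]
  refine iteratedDeriv_nonneg_of_eventually_nonneg (contDiff_rieszFunctional_comp (hfn n) a r q)
    ?_ fun k hk => ?_
  · filter_upwards [self_mem_nhdsWithin] with b hb using hf a b ha (le_of_lt hb) q hq
  · rw [iteratedDeriv_rieszFunctional_comp (hfn k), hqzero k hk, zero_mul]

end TwoAtom

/-! ### Smoothing -/

section Smoothing

open scoped Convolution ContDiff

variable {F : ℝ → ℝ} {c : ℝ} (φ : ContDiffBump c)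

lemma integrable_normed_mul_comp_sub (hF : Monotone F) (x : ℝ) :
    Integrable fun t => φ.normed volume t * F (x - t) := by
  have hanti : Antitone fun t => F (x - t) := fun s t hst => hF (by linarith)
  exact hanti.locallyIntegrable.integrable_smul_left_of_hasCompactSupport φ.continuous_normed
    φ.hasCompactSupport_normed

lemma normed_convolution_apply (F : ℝ → ℝ) (x : ℝ) :
    (φ.normed volume ⋆ F) x = ∫ t, φ.normed volume t * F (x - t) := by
  simp [convolution]

lemma contDiff_normed_convolution (hF : Monotone F) : ContDiff ℝ ∞ (φ.normed volume ⋆ F) :=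
  φ.hasCompactSupport_normed.contDiff_convolution_left _ φ.contDiff_normed hF.locallyIntegrable

lemma normed_mul_le_normed_mul {t u v : ℝ} (h : t ∈ Metric.ball c φ.rOut → u ≤ v) :
    φ.normed volume t * u ≤ φ.normed volume t * v := by
  by_cases ht : t ∈ Metric.ball c φ.rOut
  · exact mul_le_mul_of_nonneg_left (h ht) (φ.nonneg_normed t)
  · rw [← φ.support_normed_eq (μ := volume), Function.notMem_support] at ht
    simp [ht]

lemma normed_convolution_mem_Icc (hF : Monotone F) (x : ℝ) :
    (φ.normed volume ⋆ F) x ∈ Icc (F (x - c - φ.rOut)) (F (x - c + φ.rOut)) := by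
  have hconst (d : ℝ) : ∫ t, φ.normed volume t * d = d := by
    rw [integral_mul_const, φ.integral_normed, one_mul]
  rw [normed_convolution_apply]
  constructor
  · rw [← hconst (F (x - c - φ.rOut))]
    refine integral_mono (φ.integrable_normed.mul_const _) (integrable_normed_mul_comp_sub φ hF x)
      fun t => normed_mul_le_normed_mul φ fun ht => hF ?_
    linarith [(abs_lt.1 (Metric.mem_ball.1 ht)).2]
  · rw [← hconst (F (x - c + φ.rOut))]
    refine integral_mono (integrable_normed_mul_comp_sub φ hF x) (φ.integrable_normed.mul_const _)
      fun t => normed_mul_le_normed_mul φ fun ht => hF ?_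
    linarith [(abs_lt.1 (Metric.mem_ball.1 ht)).1]

lemma PreservesTwoAtomPositivity.normed_convolution {r : ℝ}
    (hF : PreservesTwoAtomPositivity r F) (hmono : Monotone F) (hφ : c + φ.rOut ≤ 0) :
    PreservesTwoAtomPositivity r (φ.normed volume ⋆ F) := by
  intro a b ha hb q hq
  have hswap : rieszFunctional (fun k => (φ.normed volume ⋆ F) (a + b * r ^ k)) q =
      ∫ t, φ.normed volume t * rieszFunctional (fun k => F (a - t + b * r ^ k)) q := by
    simp only [rieszFunctional_apply, normed_convolution_apply, ← integral_const_mul,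
      Finset.mul_sum]
    rw [← integral_finsetSum _ fun k _ =>
      (integrable_normed_mul_comp_sub φ hmono (a + b * r ^ k)).const_mul (q.coeff k)]
    simp only [mul_left_comm, sub_add_eq_add_sub]
  rw [hswap]
  refine integral_nonneg fun t => ?_
  simpa using normed_mul_le_normed_mul φ fun ht =>
    hF (a - t) b (by linarith [(abs_lt.1 (Metric.mem_ball.1 ht)).2]) hb q hq

lemma exists_absolutelyMonotonicEntire_between {r δ : ℝ} (hF : PreservesTwoAtomPositivity r F)
    (hmono : Monotone F) (hr₀ : 0 < r) (hr₁ : r < 1) (hδ : 0 < δ) :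
    ∃ G, AbsolutelyMonotonicEntire G ∧ ∀ x, 0 ≤ x → G x ∈ Icc (F x) (F (x + δ)) := by
  -- The bump lives on `(-δ, 0)`, so the convolution at `x` only sees `F` on `(x, x + δ)`.
  let φ : ContDiffBump (-(δ / 2)) := ⟨δ / 4, δ / 2, by positivity, by linarith⟩
  have hpos := hF.normed_convolution φ hmono (neg_add_cancel (δ / 2)).le
  obtain ⟨G, hG, hGeq⟩ := exists_absolutelyMonotonicEntire_eqOn_Ici
    (hpos.absolutelyMonotoneOn hr₀ hr₁ (contDiff_normed_convolution φ hmono))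
  refine ⟨G, hG, fun x hx => ?_⟩
  rw [← hGeq hx]
  convert! normed_convolution_mem_Icc φ hmono x using 3 <;> simp only [φ] <;> ring

end Smoothing

/-! ### Limits of absolutely monotonic entire functions -/

section Limits

lemma AbsolutelyMonotonicEntire.continuous {G : ℝ → ℝ} (hG : AbsolutelyMonotonicEntire G) :
    Continuous G := by
  obtain ⟨c, hc, hG⟩ := hG
  have hcont (R : ℝ) : ContinuousOn G (Icc (-R) R) := by
    rw [← funext fun x => (hG x).tsum_eq]
    refine continuousOn_tsum (fun n => by fun_prop) (hG R).summable fun n x hx => ?_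
    rw [norm_mul, norm_pow, Real.norm_of_nonneg (hc n), Real.norm_eq_abs]
    exact mul_le_mul_of_nonneg_left (pow_le_pow_left₀ (abs_nonneg x) (abs_le.2 hx) n) (hc n)
  refine continuous_iff_continuousAt.2 fun x => (hcont (|x| + 1)).continuousAt ?_
  exact Icc_mem_nhds (by linarith [neg_abs_le x]) (by linarith [le_abs_self x])

lemma coeff_mul_pow_le_of_hasSum {c : ℕ → ℝ} (hc : ∀ n, 0 ≤ c n) {x S : ℝ} (hx : 0 ≤ x)
    (h : HasSum (fun n => c n * x ^ n) S) (n : ℕ) : c n * x ^ n ≤ S :=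
  le_hasSum h n fun k _ => mul_nonneg (hc k) (pow_nonneg hx k)

lemma norm_coeff_mul_pow_le_of_hasSum {c : ℕ → ℝ} (hc : ∀ n, 0 ≤ c n) {x R S : ℝ} (hR : 0 < R)
    (h : HasSum (fun n => c n * R ^ n) S) (n : ℕ) : ‖c n * x ^ n‖ ≤ S * (|x| / R) ^ n := by
  calc ‖c n * x ^ n‖ = c n * R ^ n * (|x| / R) ^ n := by
        rw [norm_mul, norm_pow, Real.norm_of_nonneg (hc n), Real.norm_eq_abs, div_pow]
        field_simp
    _ ≤ S * (|x| / R) ^ n := by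
        gcongr
        exact coeff_mul_pow_le_of_hasSum hc hR.le h n

theorem exists_absolutelyMonotonicEntire_tendsto {ι : Type*} (l : Ultrafilter ι)
    {G : ι → ℝ → ℝ} (hG : ∀ i, AbsolutelyMonotonicEntire (G i)) {B : ℝ → ℝ}
    (hB : ∀ i x, 0 ≤ x → G i x ≤ B x) :
    ∃ H, AbsolutelyMonotonicEntire H ∧ ∀ x, Tendsto (fun i => G i x) l (nhds (H x)) := by
  choose c hc hsum using hG
  have hcoeff (n : ℕ) : ∃ d, 0 ≤ d ∧ Tendsto (fun i => c i n) l (nhds d) := by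
    have hmem (i : ι) : c i n ∈ Icc 0 (B 1) := ⟨hc i n, le_trans
      (by simpa using coeff_mul_pow_le_of_hasSum (hc i) zero_le_one (hsum i 1) n)
      (hB i 1 zero_le_one)⟩
    obtain ⟨d, hd, hlim⟩ := isCompact_Icc.ultrafilter_le_nhds (l.map fun i => c i n)
      (le_principal_iff.2 (Ultrafilter.mem_map.2 (univ_mem' hmem)))
    exact ⟨d, hd.1, hlim⟩
  choose d hd hlim using hcoeff
  have hlim' (x : ℝ) (n : ℕ) : Tendsto (fun i => c i n * x ^ n) l (nhds (d n * x ^ n)) :=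
    (hlim n).mul_const _
  have hbound (x : ℝ) (i : ι) (n : ℕ) :
      ‖c i n * x ^ n‖ ≤ B (|x| + 1) * (|x| / (|x| + 1)) ^ n := by
    refine (norm_coeff_mul_pow_le_of_hasSum (hc i) (by positivity) (hsum i (|x| + 1)) n).trans ?_
    gcongr
    exact hB i _ (by positivity)
  have hgeom (x : ℝ) : Summable fun n : ℕ => B (|x| + 1) * (|x| / (|x| + 1)) ^ n :=
    (summable_geometric_of_lt_one (by positivity)
      ((div_lt_one (by positivity)).2 (lt_add_one _))).mul_left _
  refine ⟨fun x => ∑' n, d n * x ^ n, ⟨d, hd, fun x => Summable.hasSum ?_⟩, fun x => ?_⟩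
  · exact (hgeom x).of_norm_bounded fun n => le_of_tendsto' (hlim' x n).norm fun i => hbound x i n
  · refine (tendsto_tsum_of_dominated_convergence (hgeom x) (hlim' x)
      (Eventually.of_forall (hbound x))).congr fun i => (hsum i x).tsum_eq

end Limits

/-! ### The characterization -/

section Characterization

open Polynomial

variable {r u : ℝ} {K : Set ℝ} {F G : ℝ → ℝ}

lemma PreservesTwoAtomPositivity.exists_absolutelyMonotonicEntire_eqOn_Ioi
    (hF : PreservesTwoAtomPositivity r F) (hmono : Monotone F) (hr₀ : 0 < r) (hr₁ : r < 1) :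
    ∃ G, AbsolutelyMonotonicEntire G ∧ EqOn F G (Ioi 0) := by
  choose G hG hGF using fun m : ℕ =>
    exists_absolutelyMonotonicEntire_between hF hmono hr₀ hr₁ (Nat.one_div_pos_of_nat (n := m))
  have hbound (m : ℕ) (x : ℝ) (hx : 0 ≤ x) : G m x ≤ F (x + 1) := by
    refine (hGF m x hx).2.trans (hmono ?_)
    gcongr
    exact (div_le_one (by positivity)).2 (by simp)
  obtain ⟨H, hH, hlim⟩ := exists_absolutelyMonotonicEntire_tendsto (hyperfilter ℕ) hG hbound
  have hle (x : ℝ) (hx : 0 ≤ x) : F x ≤ H x := ge_of_tendsto' (hlim x) fun m => (hGF m x hx).1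
  have hge (x y : ℝ) (hx : 0 ≤ x) (hxy : x < y) : H x ≤ F y := by
    refine le_of_tendsto (hlim x) (Nat.hyperfilter_le_atTop ?_)
    filter_upwards [tendsto_one_div_add_atTop_nhds_zero_nat.eventually_lt_const (sub_pos.2 hxy)]
      with m hm
    exact (hGF m x hx).2.trans (hmono (by linarith))
  refine ⟨H, hH, fun x hx => (hle x (le_of_lt hx)).antisymm ?_⟩
  refine le_of_tendsto (hH.continuous.continuousWithinAt (s := Iio x)).tendsto ?_
  filter_upwards [Ioo_mem_nhdsLT (mem_Ioi.1 hx)] with z hz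
  exact hge z x hz.1.le hz.2

lemma monotoneOn_Ici_of_forall_comp_mem_momentSet (one_mem : 1 ∈ K) (hu : u ∈ K) (hu₀ : u < 0)
    (hF : ∀ s ∈ momentSet K, (fun k => F (s k)) ∈ momentSet (Icc (-1) 1)) :
    MonotoneOn F (Ici 0) := by
  intro x hx y hy hxy
  rw [mem_Ici] at hx hy
  have h1u : 0 < 1 - u := by linarith
  set a := (x - u * y) / (1 - u) with ha_def
  set b := (y - x) / (1 - u) with hb_def
  have ha : 0 ≤ a := div_nonneg (by nlinarith) h1u.le
  have hb : 0 ≤ b := div_nonneg (by linarith) h1u.le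
  have hzeroth : a + b * u ^ 0 = y := by
    rw [ha_def, hb_def]
    field_simp
    ring
  have hfirst : a + b * u ^ 1 = x := by
    rw [ha_def, hb_def]
    field_simp
    ring
  have hnonneg := rieszFunctional_nonneg (p := X ^ 0 - X ^ 1)
    (hF _ (const_add_mul_pow_mem_momentSet one_mem ha hb hu)) fun z hz => by simpa using hz.2
  rw [map_sub, rieszFunctional_X_pow, rieszFunctional_X_pow, hzeroth, hfirst] at hnonneg
  exact sub_nonneg.1 hnonneg

lemma preservesTwoAtomPositivity_of_forall_comp_mem_momentSet {L : Set ℝ} (one_mem : 1 ∈ K)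
    (hr : r ∈ K) (hF : ∀ s ∈ momentSet K, (fun k => F (s k)) ∈ momentSet L) :
    PreservesTwoAtomPositivity r F := fun _ _ ha hb _ hq =>
  rieszFunctional_nonneg (hF _ (const_add_mul_pow_mem_momentSet one_mem ha hb hr)) fun z _ => hq z

lemma exists_absolutelyMonotonicEntire_eqOn_Ioi_of_forall_comp_mem_momentSet (one_mem : 1 ∈ K)
    (hr : r ∈ K) (hr₀ : 0 < r) (hr₁ : r < 1) (hu : u ∈ K) (hu₀ : u < 0)
    (hF : ∀ s ∈ momentSet K, (fun k => F (s k)) ∈ momentSet (Icc (-1) 1)) :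
    ∃ G, AbsolutelyMonotonicEntire G ∧ EqOn F G (Ioi 0) := by
  have hmono := monotoneOn_Ici_of_forall_comp_mem_momentSet one_mem hu hu₀ hF
  have heq : EqOn F (fun x => F (max x 0)) (Ici 0) := fun x hx =>
    congrArg F (max_eq_left hx).symm
  have hpos : PreservesTwoAtomPositivity r fun x => F (max x 0) :=
    (preservesTwoAtomPositivity_of_forall_comp_mem_momentSet one_mem hr hF).congr hr₀.le heq
  obtain ⟨G, hG, hFG⟩ := hpos.exists_absolutelyMonotonicEntire_eqOn_Ioi
    (fun x y hxy => hmono (le_max_right x 0) (le_max_right y 0) (max_le_max_right 0 hxy)) hr₀ hr₁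
  exact ⟨G, hG, (heq.mono Ioi_subset_Ici_self).trans hFG⟩

lemma mul_mem_Icc_neg_one_one (x : ℝ) (hx : x ∈ Icc (-1) 1) (y : ℝ) (hy : y ∈ Icc (-1) 1) :
    x * y ∈ Icc (-1) 1 := by
  rw [mem_Icc, ← abs_le] at hx hy ⊢
  rw [abs_mul]
  exact mul_le_one₀ hx (abs_nonneg y) hy

lemma eq_of_eqOn_Ioi_of_forall_comp_mem_momentSet (hK : K ⊆ Icc (-1) 1) (one_mem : 1 ∈ K)
    (hu : u ∈ K) (hu' : u ∈ Ioo (-1) 0)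
    (hF : ∀ s ∈ momentSet K, (fun k => F (s k)) ∈ momentSet (Icc (-1) 1))
    (hG : AbsolutelyMonotonicEntire G) (hFG : EqOn F G (Ioi 0)) : F = G := by
  funext x
  obtain hx | hx := lt_or_ge 0 x
  · exact hFG hx
  -- `s` is the moment sequence of `δ₁ + b δ_u` with `b` chosen such that `s 1 = x`.
  set s : ℕ → ℝ := fun k => 1 + (x - 1) / u * u ^ k with hs_def
  have hs : s ∈ momentSet K := const_add_mul_pow_mem_momentSet one_mem zero_le_one
    (div_nonneg_of_nonpos (by linarith) hu'.2.le) hu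
  have hs_one : s 1 = x := by
    rw [hs_def]
    field_simp [hu'.2.ne]
    ring
  have hs_lim : Tendsto s atTop (nhds 1) := by
    simpa using ((tendsto_pow_atTop_nhds_zero_of_abs_lt_one
      (abs_lt.2 ⟨hu'.1, hu'.2.trans zero_lt_one⟩)).const_mul ((x - 1) / u)).const_add 1
  have heventually : (fun k => F (s k)) =ᶠ[atTop] fun k => G (s k) :=
    (hs_lim.eventually_const_lt zero_lt_one).mono fun k hk => hFG hk
  simpa only [hs_one] using eq_of_eventuallyEq_of_mem_momentSet (hF s hs)
    (hG.comp_mem_momentSet measurableSet_Icc (by simp) mul_mem_Icc_neg_one_one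
      (momentSet_mono hK hs)) heventually one_ne_zero

theorem moment_transform_Icc_neg_one_one_general (hK : MeasurableSet K) (hK' : K ⊆ Icc (-1) 1)
    (one_mem : 1 ∈ K) (mul_mem : ∀ x ∈ K, ∀ y ∈ K, x * y ∈ K) (hu : u ∈ K) (hu' : u ∈ Ioo (-1) 0)
    (F : ℝ → ℝ) :
    (∀ s ∈ momentSet K, (fun k => F (s k)) ∈ momentSet K) ↔ AbsolutelyMonotonicEntire F := by
  refine ⟨fun hF => ?_, fun hF s hs => hF.comp_mem_momentSet hK one_mem mul_mem hs⟩
  have hF' : ∀ s ∈ momentSet K, (fun k => F (s k)) ∈ momentSet (Icc (-1) 1) :=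
    fun s hs => momentSet_mono hK' (hF s hs)
  have hsq_lt : u * u < 1 := by nlinarith [hu'.1, hu'.2]
  obtain ⟨G, hG, hFG⟩ := exists_absolutelyMonotonicEntire_eqOn_Ioi_of_forall_comp_mem_momentSet
    one_mem (mul_mem u hu u hu) (mul_pos_of_neg_of_neg hu'.2 hu'.2) hsq_lt hu hu'.2 hF'
  rwa [eq_of_eqOn_Ioi_of_forall_comp_mem_momentSet hK' one_mem hu hu' hF' hG hFG]

end Characterization

/-- Moment-sequence transforms: `F` maps `M([-1,1])` into itself entrywise iff `F` is the
restriction to `ℝ` of an absolutely monotonic entire function. -/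
theorem moment_transform_Icc_neg_one_one (F : ℝ → ℝ) :
    (∀ s ∈ momentSet (Set.Icc (-1 : ℝ) 1),
      (fun k => F (s k)) ∈ momentSet (Set.Icc (-1 : ℝ) 1)) ↔
    AbsolutelyMonotonicEntire F :=
  moment_transform_Icc_neg_one_one_general (u := -1 / 2) measurableSet_Icc subset_rfl (by simp)
    mul_mem_Icc_neg_one_one (by norm_num) (by norm_num) F
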